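/- arXiv:1911.03354 — 2 statements merged into one kernel-verified Lean document; each statement's English description precedes it below -/
import Mathlib

section
/- Let G₁ = {I₂, −I₂} ⊂ GL₂(ℂ) act on the polynomial ring ℂ[x,y] by (x,y) ↦ (−x,−y), and let G₂ ⊂ GL₂(ℂ) be the cyclic group of order 4 generated by diag(i, −1), acting by (x,y) ↦ (i x, −y). Then the ℂ-algebra endomorphism of ℂ[x,y] determined by x ↦ x², y ↦ y maps the invariant subalgebra ℂ[x,y]^{G₁} into ℂ[x,y]^{G₂}, and the induced map ℂ[x,y]^{G₁} → ℂ[x,y]^{G₂} is an isomorphism of ℂ-algebras. -/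
open MvPolynomial

/-- Substitution `x ↦ −x`, `y ↦ −y` (the nontrivial element of `G₁ = {I₂, −I₂}`). -/
noncomputable def sigmaOne : MvPolynomial (Fin 2) ℂ →ₐ[ℂ] MvPolynomial (Fin 2) ℂ :=
  MvPolynomial.aeval ![-(MvPolynomial.X 0), -(MvPolynomial.X 1)]

/-- Substitution `x ↦ i x`, `y ↦ −y` (the generator `diag(i, −1)` of `G₂`). -/
noncomputable def sigmaTwo : MvPolynomial (Fin 2) ℂ →ₐ[ℂ] MvPolynomial (Fin 2) ℂ :=
  MvPolynomial.aeval ![MvPolynomial.C Complex.I * MvPolynomial.X 0, -(MvPolynomial.X 1)]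

/-- The `ℂ`-algebra endomorphism of `ℂ[x,y]` determined by `x ↦ x²`, `y ↦ y`. -/
noncomputable def sqFirst : MvPolynomial (Fin 2) ℂ →ₐ[ℂ] MvPolynomial (Fin 2) ℂ :=
  MvPolynomial.aeval ![MvPolynomial.X 0 ^ 2, MvPolynomial.X 1]

/-!
The two invariant rings are spanned by monomials, and `x ↦ x²`, `y ↦ y` carries monomials
injectively to monomials. It intertwines `diag(−1, −1)` with `diag(i, −1)` because `i² = −1`, so it
maps invariants to invariants. Conversely `xᵏ yˡ` is fixed by `diag(i, −1)` only if `iᵏ (−1)ˡ = 1`,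
which forces `k` to be even; hence every `G₂`-invariant is a polynomial in `x²` and `y`, and its
preimage is `G₁`-invariant by injectivity.
-/

theorem map_equalizer_id_eq_of_comp_eq {R A B : Type*} [CommSemiring R] [Semiring A] [Algebra R A]
    [Semiring B] [Algebra R B] {f : A →ₐ[R] B} (hf : Function.Injective f) {φ : A →ₐ[R] A}
    {ψ : B →ₐ[R] B} (hcomp : f.comp φ = ψ.comp f)
    (hrange : AlgHom.equalizer ψ (AlgHom.id R B) ≤ f.range) :
    (AlgHom.equalizer φ (AlgHom.id R A)).map f = AlgHom.equalizer ψ (AlgHom.id R B) := by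
  have hcomp_apply (p : A) : f (φ p) = ψ (f p) := DFunLike.congr_fun hcomp p
  ext q
  simp only [Subalgebra.mem_map, AlgHom.mem_equalizer, AlgHom.id_apply]
  constructor
  · rintro ⟨p, hp, rfl⟩
    rw [← hcomp_apply, hp]
  · intro hq
    obtain ⟨p, rfl⟩ := hrange hq
    exact ⟨p, hf ((hcomp_apply p).trans hq), rfl⟩

section Substitutions

variable {σ R : Type*} [CommSemiring R]

/-- The diagonal substitution `Xᵢ ↦ aᵢ Xᵢ`, i.e. the action of the diagonal matrix with entries `a`
on polynomials. -/
noncomputable def scaleVars (a : σ → R) : MvPolynomial σ R →ₐ[R] MvPolynomial σ R :=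
  aeval fun i => C (a i) * X i

/-- The substitution `Xᵢ ↦ Xᵢ ^ nᵢ`; it is `MvPolynomial.expand` with an exponent depending on the
variable. -/
noncomputable def powVars (n : σ → ℕ) : MvPolynomial σ R →ₐ[R] MvPolynomial σ R :=
  aeval fun i => X i ^ n i

theorem scaleVars_monomial (a : σ → R) (m : σ →₀ ℕ) (c : R) :
    scaleVars a (monomial m c) = monomial m ((m.prod fun i k => a i ^ k) * c) := by
  rw [scaleVars, aeval_monomial, algebraMap_eq, monomial_eq, C_mul, map_finsuppProd]
  simp only [mul_pow, Finsupp.prod_mul, C_pow]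
  ring

theorem coeff_scaleVars (a : σ → R) (p : MvPolynomial σ R) (m : σ →₀ ℕ) :
    coeff m (scaleVars a p) = (m.prod fun i k => a i ^ k) * coeff m p := by
  classical
  induction p using MvPolynomial.induction_on' with
  | monomial l c =>
    rw [scaleVars_monomial, coeff_monomial, coeff_monomial]
    split_ifs with h
    · rw [h]
    · rw [mul_zero]
  | add p q hp hq => rw [map_add, coeff_add, coeff_add, hp, hq, mul_add]

theorem prod_pow_eq_one_of_scaleVars_eq_self [IsCancelMulZero R] {a : σ → R}
    {p : MvPolynomial σ R} (hp : scaleVars a p = p) {m : σ →₀ ℕ} (hm : m ∈ p.support) :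
    (m.prod fun i k => a i ^ k) = 1 := by
  rw [← mul_eq_right₀ (mem_support_iff.mp hm), ← coeff_scaleVars, hp]

theorem powVars_comp_scaleVars (n : σ → ℕ) (a : σ → R) :
    (powVars n).comp (scaleVars fun i => a i ^ n i) = (scaleVars a).comp (powVars n) := by
  ext1 i
  simp [powVars, scaleVars, mul_pow, algebraMap_eq]

theorem mem_range_powVars_of_dvd {n : σ → ℕ} {p : MvPolynomial σ R}
    (hp : ∀ m ∈ p.support, ∀ i, n i ∣ m i) :
    p ∈ (powVars n : MvPolynomial σ R →ₐ[R] MvPolynomial σ R).range := by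
  rw [p.as_sum]
  refine sum_mem fun m hm => ?_
  rw [monomial_eq]
  refine mul_mem (Subalgebra.algebraMap_mem _ _) (prod_mem fun i _ => ?_)
  obtain ⟨k, hk⟩ := hp m hm i
  exact ⟨X i ^ k, by simp [powVars, hk, pow_mul]⟩

end Substitutions

section CommRing

variable {σ R : Type*} [CommRing R]

theorem powVars_injective {n : σ → ℕ} (hn : ∀ i, n i ≠ 0) :
    Function.Injective (powVars n : MvPolynomial σ R →ₐ[R] MvPolynomial σ R) := by
  have hX_pow : AlgebraicIndependent R fun i => (X i : MvPolynomial σ R) ^ n i := by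
    simpa using (algebraicIndependent_X σ R).polynomial_aeval_of_transcendental
      fun i => (Polynomial.transcendental_X R).pow (Nat.pos_of_ne_zero (hn i))
  exact hX_pow

theorem stmt_17_general [NoZeroDivisors R] {n : σ → ℕ} (hn : ∀ i, n i ≠ 0) {a : σ → R}
    (hdvd : ∀ m : σ →₀ ℕ, (m.prod fun i k => a i ^ k) = 1 → ∀ i, n i ∣ m i) :
    Subalgebra.map (powVars n)
        (AlgHom.equalizer (scaleVars fun i => a i ^ n i) (AlgHom.id R (MvPolynomial σ R))) =
      AlgHom.equalizer (scaleVars a) (AlgHom.id R (MvPolynomial σ R)) ∧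
    Function.Injective (powVars n : MvPolynomial σ R →ₐ[R] MvPolynomial σ R) :=
  ⟨map_equalizer_id_eq_of_comp_eq (powVars_injective hn) (powVars_comp_scaleVars n a)
    fun _ hp => mem_range_powVars_of_dvd fun m hm =>
      hdvd m (prod_pow_eq_one_of_scaleVars_eq_self hp hm), powVars_injective hn⟩

end CommRing

theorem even_of_pow_mul_neg_one_pow_eq_one {R : Type*} [CommRing R] (hR : (-1 : R) ≠ 1) {ι : R}
    (hι : ι ^ 2 = -1) {k l : ℕ} (h : ι ^ k * (-1) ^ l = 1) : Even k := by
  rw [← neg_one_pow_eq_one_iff_even hR]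
  calc (-1 : R) ^ k = (ι ^ 2) ^ k * ((-1) ^ 2) ^ l := by rw [hι, neg_one_sq, one_pow, mul_one]
    _ = (ι ^ k * (-1) ^ l) ^ 2 := by rw [mul_pow, pow_right_comm ι, pow_right_comm (-1)]
    _ = 1 := by rw [h, one_pow]

theorem two_one_dvd_of_prod_I_neg_one_pow_eq_one (m : Fin 2 →₀ ℕ)
    (hm : (m.prod fun i k => (![Complex.I, -1] : Fin 2 → ℂ) i ^ k) = 1) (i : Fin 2) :
    (![2, 1] : Fin 2 → ℕ) i ∣ m i := by
  rw [Finsupp.prod_fintype _ _ fun _ => pow_zero _, Fin.prod_univ_two] at hm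
  fin_cases i
  · exact (even_of_pow_mul_neg_one_pow_eq_one (by norm_num) Complex.I_sq hm).two_dvd
  · exact one_dvd _

theorem sigmaOne_eq_scaleVars :
    sigmaOne = scaleVars fun i => (![Complex.I, -1] : Fin 2 → ℂ) i ^ (![2, 1] : Fin 2 → ℕ) i := by
  have hI : (C Complex.I : MvPolynomial (Fin 2) ℂ) ^ 2 = -1 := by
    rw [← C_pow, Complex.I_sq, C_neg, C_1]
  ext1 i
  fin_cases i <;> simp [sigmaOne, scaleVars, hI]

theorem sigmaTwo_eq_scaleVars : sigmaTwo = scaleVars ![Complex.I, -1] := by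
  ext1 i
  fin_cases i <;> simp [sigmaTwo, scaleVars]

theorem sqFirst_eq_powVars : sqFirst = powVars ![2, 1] := by
  ext1 i
  fin_cases i <;> simp [sqFirst, powVars]

/-- The endomorphism `x ↦ x²`, `y ↦ y` of `ℂ[x,y]` maps the invariant algebra
`ℂ[x,y]^{G₁}` into `ℂ[x,y]^{G₂}` and induces an isomorphism of `ℂ`-algebras
`ℂ[x,y]^{G₁} ≅ ℂ[x,y]^{G₂}` (the invariants being the equalizers of the corresponding
generator substitutions with the identity). -/
theorem stmt_17 :
    Subalgebra.map sqFirst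
        (AlgHom.equalizer sigmaOne (AlgHom.id ℂ (MvPolynomial (Fin 2) ℂ))) =
      AlgHom.equalizer sigmaTwo (AlgHom.id ℂ (MvPolynomial (Fin 2) ℂ)) ∧
    Set.InjOn sqFirst
      (AlgHom.equalizer sigmaOne (AlgHom.id ℂ (MvPolynomial (Fin 2) ℂ)) :
        Set (MvPolynomial (Fin 2) ℂ)) := by
  rw [sigmaOne_eq_scaleVars, sigmaTwo_eq_scaleVars, sqFirst_eq_powVars]
  exact (stmt_17_general (by decide) two_one_dvd_of_prod_I_neg_one_pow_eq_one).imp_right (·.injOn)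
end

section
/- For every real number L > 0 and all real numbers s, N₁, N₂, ν₁, ν₂, set ⟨1⟩ = (N₁+3N₂)s/7 + (ν₁+3ν₂)/7, ⟨2⟩ = (3N₁+2N₂)s/7 + (3ν₁+2ν₂)/7, ⟨3⟩ = (5N₁+N₂)s/7 + (5ν₁+ν₂)/7, ⟨0⟩ = N₂s + ν₂, ⟨4⟩ = N₁s + ν₁, and K₁ = 1 + L^{⟨1⟩} + L^{2⟨1⟩}, K₂ = 1 + L^{⟨2⟩}, K₃ = 1 + L^{⟨3⟩}. Then the determinant of the 3×3 matrix with rows (K₁, −L^{⟨3⟩}, L^{⟨2⟩} − 1), (−L^{⟨0⟩}, K₂, −L^{⟨1⟩}), (0, −L^{⟨4⟩}, K₃) equals 1 + L^{(N₁+3N₂)s/7 + (ν₁+3ν₂)/7} + L^{(2N₁+6N₂)s/7 + (2ν₁+6ν₂)/7} + L^{(3N₁+2N₂)s/7 + (3ν₁+2ν₂)/7} + L^{(4N₁+5N₂)s/7 + (4ν₁+5ν₂)/7} + L^{(5N₁+N₂)s/7 + (5ν₁+ν₂)/7} + L^{(6N₁+4N₂)s/7 + (6ν₁+4ν₂)/7}.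 -/
open Real

/-! Put `a = (N₁ s + ν₁) / 7`, `b = (N₂ s + ν₂) / 7` and `xᵢ = L ^ ⟨i⟩`. The exponents are
`⟨0⟩ = 7 b`, `⟨1⟩ = a + 3 b`, `⟨2⟩ = 3 a + 2 b`, `⟨3⟩ = 5 a + b`, `⟨4⟩ = 7 a`, so the `xᵢ` satisfy
Riemenschneider's equations of a cyclic quotient singularity, among them `x₀ x₃ = x₁² x₂`,
`x₀ x₄ = x₁² x₃` and `x₁ x₄ = x₂ x₃`. Modulo these three the determinant collapses to
`1 + x₁ + x₁² + x₂ + x₁ x₂ + x₃ + x₁ x₃`, whose terms are the monomials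
`L ^ (k a + (3 k mod 7) b)` for `0 ≤ k < 7`. -/

section HirzebruchJung

variable {R : Type*} [CommRing R]

/-- The matrix of Veys' determinant `𝒟_r` for the continued fraction `7/3 = [3, 2, 2]`, in which
`xᵢ` stands for `L ^ ⟨i⟩`; the diagonal entries are the `q`-deformations of `3`, `2`, `2`. -/
def veysMatrix (x₀ x₁ x₂ x₃ x₄ : R) : Matrix (Fin 3) (Fin 3) R :=
  !![1 + x₁ + x₁ ^ 2, -x₃, x₂ - 1;
    -x₀, 1 + x₂, -x₁;
    0, -x₄, 1 + x₃]

theorem det_veysMatrix (x₀ x₁ x₂ x₃ x₄ : R) :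
    (veysMatrix x₀ x₁ x₂ x₃ x₄).det =
      (1 + x₁ + x₁ ^ 2) * ((1 + x₂) * (1 + x₃) - x₁ * x₄) - x₀ * x₃ * (1 + x₃) +
        (x₂ - 1) * (x₀ * x₄) := by
  rw [veysMatrix, Matrix.det_fin_three]
  simp only [Matrix.of_apply, Matrix.cons_val]
  ring

theorem det_veysMatrix_of_riemenschneider {x₀ x₁ x₂ x₃ x₄ : R}
    (h₀₃ : x₀ * x₃ = x₁ ^ 2 * x₂) (h₀₄ : x₀ * x₄ = x₁ ^ 2 * x₃) (h₁₄ : x₁ * x₄ = x₂ * x₃) :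
    (veysMatrix x₀ x₁ x₂ x₃ x₄).det = 1 + x₁ + x₁ ^ 2 + x₂ + x₁ * x₂ + x₃ + x₁ * x₃ :=
  calc
    _ = (1 + x₁ + x₁ ^ 2) * ((1 + x₂) * (1 + x₃) - x₂ * x₃) - x₁ ^ 2 * x₂ * (1 + x₃) +
        (x₂ - 1) * (x₁ ^ 2 * x₃) := by rw [det_veysMatrix, h₁₄, h₀₃, h₀₄]
    _ = _ := by ring

/-- The determinant for an arbitrary character `ψ` in place of `x ↦ L ^ x`, where `a` and `b` stand
for `(N₁ s + ν₁) / 7` and `(N₂ s + ν₂) / 7`. -/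
theorem stmt_18_general {A : Type*} [AddCommMonoid A] (ψ : AddChar A R) (a b : A) :
    (veysMatrix (ψ (7 • b)) (ψ (a + 3 • b)) (ψ (3 • a + 2 • b)) (ψ (5 • a + b)) (ψ (7 • a))).det =
      ∑ k ∈ Finset.range 7, ψ (k • a + (3 * k % 7) • b) := by
  simp only [AddChar.map_add_eq_mul, AddChar.map_nsmul_eq_pow]
  rw [det_veysMatrix_of_riemenschneider (by ring) (by ring) (by ring)]
  simp only [Finset.sum_range_succ, Finset.sum_range_zero, Nat.reduceMul, Nat.reduceMod]
  ring

end HirzebruchJung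

/-- The character `x ↦ L ^ x` of the additive group of `ℝ`. -/
@[simps]
noncomputable def rpowAddChar {L : ℝ} (hL : 0 < L) : AddChar ℝ ℝ where
  toFun x := L ^ x
  map_zero_eq_one' := rpow_zero L
  map_add_eq_mul' := rpow_add hL

theorem det_veysMatrix_rpow {L : ℝ} (hL : 0 < L) (a b : ℝ) :
    (veysMatrix (L ^ (7 * b)) (L ^ (a + 3 * b)) (L ^ (3 * a + 2 * b)) (L ^ (5 * a + b))
        (L ^ (7 * a))).det =
      1 + L ^ (a + 3 * b) + L ^ (2 * a + 6 * b) + L ^ (3 * a + 2 * b) + L ^ (4 * a + 5 * b) +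
        L ^ (5 * a + b) + L ^ (6 * a + 4 * b) := by
  simpa [Finset.sum_range_succ] using stmt_18_general (rpowAddChar hL) a b

/-- Veys' determinant `𝒟_r` for the cyclic quotient singularity `1/7(1,3)` coincides
with the sum `S_G(𝐍,𝛎;s)` over the cyclic group of order 7. -/
theorem stmt_18 (L : ℝ) (hL : 0 < L) (s N₁ N₂ ν₁ ν₂ : ℝ) :
    Matrix.det
        !![1 + L ^ ((N₁ + 3 * N₂) * s / 7 + (ν₁ + 3 * ν₂) / 7) +
              L ^ (2 * ((N₁ + 3 * N₂) * s / 7 + (ν₁ + 3 * ν₂) / 7)),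
            -(L ^ ((5 * N₁ + N₂) * s / 7 + (5 * ν₁ + ν₂) / 7)),
            L ^ ((3 * N₁ + 2 * N₂) * s / 7 + (3 * ν₁ + 2 * ν₂) / 7) - 1;
          -(L ^ (N₂ * s + ν₂)),
            1 + L ^ ((3 * N₁ + 2 * N₂) * s / 7 + (3 * ν₁ + 2 * ν₂) / 7),
            -(L ^ ((N₁ + 3 * N₂) * s / 7 + (ν₁ + 3 * ν₂) / 7));
          0, -(L ^ (N₁ * s + ν₁)),
            1 + L ^ ((5 * N₁ + N₂) * s / 7 + (5 * ν₁ + ν₂) / 7)] =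
      1 + L ^ ((N₁ + 3 * N₂) * s / 7 + (ν₁ + 3 * ν₂) / 7) +
        L ^ ((2 * N₁ + 6 * N₂) * s / 7 + (2 * ν₁ + 6 * ν₂) / 7) +
        L ^ ((3 * N₁ + 2 * N₂) * s / 7 + (3 * ν₁ + 2 * ν₂) / 7) +
        L ^ ((4 * N₁ + 5 * N₂) * s / 7 + (4 * ν₁ + 5 * ν₂) / 7) +
        L ^ ((5 * N₁ + N₂) * s / 7 + (5 * ν₁ + ν₂) / 7) +
        L ^ ((6 * N₁ + 4 * N₂) * s / 7 + (6 * ν₁ + 4 * ν₂) / 7) := by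
  have h := det_veysMatrix_rpow hL ((N₁ * s + ν₁) / 7) ((N₂ * s + ν₂) / 7)
  simp only [veysMatrix, ← rpow_mul_natCast hL.le, Nat.cast_ofNat] at h
  ring_nf at h ⊢
  exact h
end
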